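/- For each ε > 0 there is C > 0 with the following property. Let s ∈ ℕ, and suppose that for each q with 2^s ≤ q < 2^{s+1} one is given δ_q ∈ {0, 1}, a quadratic Dirichlet character χ_q modulo q, and β_q ∈ [1/2, 1]. For a/q ∈ 𝓡_s define L̂_N^{a,q}(ξ) = G(𝟙_q, a) M̂_N^1(ξ) − δ_q G(χ_q, a) M̂_N^{β_q}(ξ), where 𝟙_q is the principal character modulo q, and set ν_n^s(ξ) = Σ_{a/q ∈ 𝓡_s} L̂_{2^n}^{a,q}(ξ − a/q) η_s(ξ − a/q). Then for every finitely supported f : ℤ → ℂ, ‖ sup_{0 ≤ n ≤ 2^{s+4}} |ℱ⁻¹(ν_n^s f̂)| ‖_{ℓ²(ℤ)} ≤ C (s+1) 2^{−s(1/2−ε)} ‖f‖_{ℓ²(ℤ)}, where C is independent of s and of the choices of δ_q, χ_q, β_q. -/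

import Mathlib

open scoped BigOperators

/-- `η` is smooth, `0 ≤ η ≤ 1`, `η = 1` on `[−1/4, 1/4]`, `η = 0` off `(−1/2, 1/2)`,
and `η` is a convolution of two smooth functions supported in `(−1/2, 1/2)`. -/
def IsEta (η : ℝ → ℝ) : Prop :=
  ContDiff ℝ (⊤ : ℕ∞) η ∧ (∀ ξ, 0 ≤ η ξ ∧ η ξ ≤ 1) ∧ (∀ ξ : ℝ, |ξ| ≤ 1 / 4 → η ξ = 1) ∧
    (∀ ξ : ℝ, 1 / 2 ≤ |ξ| → η ξ = 0) ∧
    ∃ g₁ g₂ : ℝ → ℝ, ContDiff ℝ (⊤ : ℕ∞) g₁ ∧ ContDiff ℝ (⊤ : ℕ∞) g₂ ∧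
      (∀ x : ℝ, x ∉ Set.Ioo (-(1 / 2) : ℝ) (1 / 2) → g₁ x = 0) ∧
      (∀ x : ℝ, x ∉ Set.Ioo (-(1 / 2) : ℝ) (1 / 2) → g₂ x = 0) ∧
      ∀ x : ℝ, η x = ∫ y : ℝ, g₁ y * g₂ (x - y)

/-- `η_s(ξ) = η(2^{4s} ξ)`, regarded as a 1-periodic function (periodization). -/
noncomputable def etaPer (η : ℝ → ℝ) (s : ℕ) (ξ : ℝ) : ℝ :=
  ∑' k : ℤ, η (2 ^ (4 * s) * (ξ - k))

/-- The Fourier transform `f̂(ξ) = Σ_{n ∈ ℤ} f(n) e^{−2πi ξ n}`. -/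
noncomputable def fhat (f : ℤ → ℂ) (ξ : ℝ) : ℂ :=
  ∑' n : ℤ, f n * Complex.exp (-(2 * Real.pi * Complex.I * ξ * n))

/-- The inverse Fourier transform `ℱ⁻¹g(x) = ∫₀¹ g(ξ) e^{2πi ξ x} dξ`, `x ∈ ℤ`. -/
noncomputable def FinvInt (g : ℝ → ℂ) (x : ℤ) : ℂ :=
  ∫ ξ in (0 : ℝ)..1, g ξ * Complex.exp (2 * Real.pi * Complex.I * ξ * x)

/-- The multiplier `M̂_N^β(ξ) = (1/N) Σ_{n=1}^N ((n^β − (n−1)^β)/β) e^{2πi ξ n}`. -/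
noncomputable def Mhat (β : ℝ) (N : ℕ) (ξ : ℝ) : ℂ :=
  ((N : ℂ))⁻¹ * ∑ n ∈ Finset.Icc 1 N,
    (((((n : ℝ) ^ β - ((n : ℝ) - 1) ^ β) / β) : ℝ) : ℂ) *
      Complex.exp (2 * Real.pi * Complex.I * ξ * n)

/-- `A_q = {1 ≤ a ≤ q : gcd(a, q) = 1}`. -/
def Aq (q : ℕ) : Finset ℕ := (Finset.Icc 1 q).filter (fun a => Nat.Coprime a q)

/-- The normalized Gauss sum `G(χ, n) = (1/φ(q)) Σ_{r ∈ A_q} χ(r) e^{2πi r n/q}`. -/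
noncomputable def gaussG (q : ℕ) (χ : DirichletCharacter ℂ q) (n : ℤ) : ℂ :=
  ((q.totient : ℂ))⁻¹ *
    ∑ r ∈ Aq q, χ (r : ZMod q) * Complex.exp (2 * Real.pi * Complex.I * r * n / q)

/-- The fractions `a/q ∈ 𝓡_s`, encoded as pairs `(a, q)` with `a ∈ A_q`,
`2^s ≤ q < 2^{s+1}`, and `q` square-free or `4 ∣ q` with `q/4` square-free. -/
def Rset (s : ℕ) : Finset (ℕ × ℕ) :=
  (Finset.range (2 ^ (s + 1)) ×ˢ Finset.range (2 ^ (s + 1))).filter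
    (fun p => 2 ^ s ≤ p.2 ∧ 1 ≤ p.1 ∧ p.1 ≤ p.2 ∧ Nat.Coprime p.1 p.2 ∧
      (Squarefree p.2 ∨ (4 ∣ p.2 ∧ Squarefree (p.2 / 4))))

/-- The approximating multiplier `ν_n^s` built from the data `δ_q`, `χ_q`, `β_q`:
`ν_n^s(ξ) = Σ_{a/q ∈ 𝓡_s} L̂_{2^n}^{a,q}(ξ − a/q) η_s(ξ − a/q)` where
`L̂_N^{a,q} = G(𝟙_q, a) M̂_N^1 − δ_q G(χ_q, a) M̂_N^{β_q}`. -/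
noncomputable def nuMult (η : ℝ → ℝ) (δ : ℕ → ℕ) (χ : (q : ℕ) → DirichletCharacter ℂ q)
    (β : ℕ → ℝ) (s n : ℕ) (ξ : ℝ) : ℂ :=
  ∑ p ∈ Rset s,
    (gaussG p.2 1 (p.1 : ℤ) * Mhat 1 (2 ^ n) (ξ - (p.1 : ℝ) / p.2) -
        (δ p.2 : ℂ) * gaussG p.2 (χ p.2) (p.1 : ℤ) * Mhat (β p.2) (2 ^ n) (ξ - (p.1 : ℝ) / p.2)) *
      (etaPer η s (ξ - (p.1 : ℝ) / p.2) : ℂ)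

/-!
Fractions of `𝓡_s` are at least `2 ^ (-4s)` apart modulo `1`, so at each frequency `ξ` at most one
term of `ν_n^s` is nonzero. In that term the Gauss sums do not depend on `n` and are at most
`(s + 1) / √(2 ^ s)`: the unnormalized sum is at most `√q` by Parseval, and `q / φ(q)` is at most
logarithmic. The remaining factors `n ↦ M̂_{2^n}^β(ξ)` have variation bounded uniformly in `ξ`,
because `M̂_N^β` is close to its decreasing value at `0` when `N ‖e(ξ) - 1‖ ≤ 1` and decays like
`(N ‖e(ξ) - 1‖)⁻¹` otherwise. A sequence of multipliers of bounded variation satisfies a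
Rademacher–Menshov inequality: chaining along dyadic intervals and Plancherel bound the supremum
over `2 ^ S + 1` multipliers in `ℓ²` with a loss of `S + 2`, here comparable to `s + 1`.
-/

section Variation

open Finset

variable {E : Type*} [SeminormedAddCommGroup E]

/-- The variation norm `‖a₀‖ + ∑_{n < N} ‖a_{n+1} - a_n‖` of the segment `a₀, …, a_N` of a
sequence; it is the quantity that controls the maximal function of a family of multipliers. -/
noncomputable def variationNorm (a : ℕ → E) (N : ℕ) : ℝ :=
  ‖a 0‖ + ∑ n ∈ range N, ‖a (n + 1) - a n‖

lemma norm_sub_le_sum_Ico_norm_sub (a : ℕ → E) {m n : ℕ} (hmn : m ≤ n) :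
    ‖a n - a m‖ ≤ ∑ k ∈ Ico m n, ‖a (k + 1) - a k‖ := by
  simpa only [dist_eq_norm', norm_sub_rev] using dist_le_Ico_sum_dist a hmn

lemma norm_le_variationNorm (a : ℕ → E) {n N : ℕ} (hn : n ≤ N) :
    ‖a n‖ ≤ variationNorm a N := by
  have hdiff := norm_sub_le_sum_Ico_norm_sub a n.zero_le
  rw [Nat.Ico_zero_eq_range] at hdiff
  have hmono : ∑ k ∈ range n, ‖a (k + 1) - a k‖ ≤ ∑ k ∈ range N, ‖a (k + 1) - a k‖ :=
    sum_le_sum_of_subset_of_nonneg (range_mono hn) fun _ _ _ => norm_nonneg _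
  unfold variationNorm
  linarith [norm_le_norm_add_norm_sub' (a n) (a 0)]

lemma variationNorm_nonneg (a : ℕ → E) (N : ℕ) : 0 ≤ variationNorm a N :=
  (norm_nonneg _).trans (norm_le_variationNorm a N.zero_le)

lemma variationNorm_zero (N : ℕ) : variationNorm (fun _ => (0 : E)) N = 0 := by
  simp [variationNorm]

lemma variationNorm_add_le (a b : ℕ → E) (N : ℕ) :
    variationNorm (fun n => a n + b n) N ≤ variationNorm a N + variationNorm b N := by
  have hsum : ∑ n ∈ range N, ‖a (n + 1) + b (n + 1) - (a n + b n)‖ ≤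
      ∑ n ∈ range N, (‖a (n + 1) - a n‖ + ‖b (n + 1) - b n‖) := by
    refine sum_le_sum fun n _ => ?_
    rw [add_sub_add_comm]
    exact norm_add_le _ _
  rw [sum_add_distrib] at hsum
  unfold variationNorm
  linarith [norm_add_le (a 0) (b 0)]

lemma variationNorm_const_mul {R : Type*} [SeminormedRing R] [NormMulClass R] (c : R) (a : ℕ → R)
    (N : ℕ) : variationNorm (fun n => c * a n) N = ‖c‖ * variationNorm a N := by
  simp only [variationNorm, ← mul_sub, norm_mul, ← mul_sum, mul_add]

lemma variationNorm_mul_const {R : Type*} [SeminormedRing R] [NormMulClass R] (a : ℕ → R) (c : R)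
    (N : ℕ) : variationNorm (fun n => a n * c) N = variationNorm a N * ‖c‖ := by
  simp only [variationNorm, ← sub_mul, norm_mul, ← sum_mul, add_mul]

lemma variationNorm_le_two_mul_sum_norm (a : ℕ → E) (N : ℕ) :
    variationNorm a N ≤ 2 * ∑ n ∈ range (N + 1), ‖a n‖ := by
  have hsum : ∑ n ∈ range N, ‖a (n + 1) - a n‖ ≤ ∑ n ∈ range N, (‖a (n + 1)‖ + ‖a n‖) :=
    sum_le_sum fun n _ => norm_sub_le _ _
  rw [sum_add_distrib] at hsum
  have hhead := sum_range_succ' (fun n => ‖a n‖) N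
  have hlast := sum_range_succ (fun n => ‖a n‖) N
  unfold variationNorm
  linarith [norm_nonneg (a N)]

lemma variationNorm_le_of_antitone {b : ℕ → ℝ} (hb : Antitone b) (hb0 : ∀ n, 0 ≤ b n) (N : ℕ) :
    variationNorm b N ≤ 2 * b 0 := by
  have hstep (n : ℕ) : ‖b (n + 1) - b n‖ = b n - b (n + 1) := by
    rw [norm_sub_rev, Real.norm_of_nonneg (sub_nonneg.2 (hb n.le_succ))]
  simp only [variationNorm, hstep, sum_range_sub', Real.norm_of_nonneg (hb0 0)]
  linarith [hb0 N]

lemma variationNorm_ofReal (b : ℕ → ℝ) (N : ℕ) :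
    variationNorm (fun n => (b n : ℂ)) N = variationNorm b N := by
  simp only [variationNorm, ← Complex.ofReal_sub, Complex.norm_real]

lemma variationNorm_le_of_antitone_approx {b : ℕ → ℝ} (hb : Antitone b) (hb0 : ∀ n, 0 ≤ b n)
    (a : ℕ → ℂ) (N : ℕ) :
    variationNorm a N ≤ 2 * b 0 + 2 * ∑ n ∈ range (N + 1), ‖a n - b n‖ :=
  calc variationNorm a N
      = variationNorm (fun n => (b n : ℂ) + (a n - b n)) N := by
        simp only [add_sub_cancel]
    _ ≤ variationNorm (fun n => (b n : ℂ)) N + variationNorm (fun n => a n - b n) N :=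
        variationNorm_add_le _ _ N
    _ ≤ _ := by
        rw [variationNorm_ofReal]
        exact add_le_add (variationNorm_le_of_antitone hb hb0 N)
          (variationNorm_le_two_mul_sum_norm _ N)

/-- The square sum of all increments of `a₀, …, a_{2^S}` over dyadic intervals, together with
`‖a₀‖²`: the majorant in the Rademacher–Menshov chaining argument. -/
noncomputable def dyadicSquareSum (a : ℕ → E) (S : ℕ) : ℝ :=
  ‖a 0‖ ^ 2 + ∑ i ∈ range (S + 1), ∑ j ∈ range (2 ^ (S - i)),
    ‖a ((j + 1) * 2 ^ i) - a (j * 2 ^ i)‖ ^ 2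

lemma norm_sub_sq_le_sum_dyadic (a : ℕ → E) {S n i : ℕ} (hn : n ≤ 2 ^ S) (hi : i ≤ S) :
    ‖a (n / 2 ^ i * 2 ^ i) - a (n / 2 ^ (i + 1) * 2 ^ (i + 1))‖ ^ 2 ≤
      ∑ j ∈ range (2 ^ (S - i)), ‖a ((j + 1) * 2 ^ i) - a (j * 2 ^ i)‖ ^ 2 := by
  have hcoarse : n / 2 ^ (i + 1) * 2 ^ (i + 1) = (n / 2 ^ i / 2 * 2) * 2 ^ i := by
    rw [Nat.div_div_eq_div_mul, ← pow_succ, mul_assoc, ← pow_succ']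
  have hle : n / 2 ^ i ≤ 2 ^ (S - i) :=
    (Nat.div_le_div_right hn).trans_eq (Nat.pow_div hi two_pos)
  rw [hcoarse]
  obtain ⟨k, hk | hk⟩ := Nat.even_or_odd' (n / 2 ^ i)
  · rw [hk, Nat.mul_div_cancel_left k two_pos, mul_comm k 2, sub_self, norm_zero,
      zero_pow two_ne_zero]
    exact sum_nonneg fun _ _ => by positivity
  · have hk2 : (2 * k + 1) / 2 * 2 = 2 * k := by omega
    rw [hk, hk2]
    exact single_le_sum (f := fun j => ‖a ((j + 1) * 2 ^ i) - a (j * 2 ^ i)‖ ^ 2)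
      (fun _ _ => by positivity) (mem_range.2 (by omega))

lemma sq_add_sum_range_le (x : ℝ) (y : ℕ → ℝ) (m : ℕ) :
    (x + ∑ i ∈ range m, y i) ^ 2 ≤ (m + 1) * (x ^ 2 + ∑ i ∈ range m, y i ^ 2) := by
  have h := sq_sum_le_card_mul_sum_sq (s := univ) (f := fun o : Option (Fin m) => o.elim x (y ·))
  simpa [Fintype.sum_option, sum_range] using h

-- Rounding `n` down to multiples of `2^0, 2^1, …, 2^{S+1}` joins `n` to `0` by dyadic steps.
lemma norm_sq_le_mul_dyadicSquareSum (a : ℕ → E) {S n : ℕ} (hn : n ≤ 2 ^ S) :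
    ‖a n‖ ^ 2 ≤ (S + 2) * dyadicSquareSum a S := by
  set d : ℕ → E := fun i => a (n / 2 ^ i * 2 ^ i)
  have hd0 : d 0 = a n := by simp [d]
  have hdS : d (S + 1) = a 0 := by
    have : n / 2 ^ (S + 1) = 0 :=
      Nat.div_eq_of_lt (hn.trans_lt (Nat.pow_lt_pow_right one_lt_two S.lt_succ_self))
    simp [d, this]
  have hchain : ‖a n‖ ≤ ‖a 0‖ + ∑ i ∈ range (S + 1), ‖d i - d (i + 1)‖ := by
    have h := dist_le_range_sum_dist d (S + 1)
    simp only [dist_eq_norm, hd0, hdS] at h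
    linarith [norm_le_norm_add_norm_sub' (a n) (a 0)]
  calc ‖a n‖ ^ 2 ≤ (‖a 0‖ + ∑ i ∈ range (S + 1), ‖d i - d (i + 1)‖) ^ 2 := by gcongr
    _ ≤ ((S + 1 : ℕ) + 1) * (‖a 0‖ ^ 2 + ∑ i ∈ range (S + 1), ‖d i - d (i + 1)‖ ^ 2) :=
        sq_add_sum_range_le _ _ _
    _ = (S + 2) * (‖a 0‖ ^ 2 + ∑ i ∈ range (S + 1), ‖d i - d (i + 1)‖ ^ 2) := by
        push_cast; ring
    _ ≤ (S + 2) * dyadicSquareSum a S := by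
        unfold dyadicSquareSum
        gcongr with i hi
        exact norm_sub_sq_le_sum_dyadic a hn (Nat.lt_succ_iff.1 (mem_range.1 hi))

lemma sum_norm_sub_mul_le (a : ℕ → E) (J m : ℕ) :
    ∑ j ∈ range J, ‖a ((j + 1) * m) - a (j * m)‖ ≤ ∑ n ∈ range (J * m), ‖a (n + 1) - a n‖ := by
  induction J with
  | zero => simp
  | succ J ih =>
    have hJ : J * m ≤ (J + 1) * m := Nat.mul_le_mul_right m J.le_succ
    rw [sum_range_succ, ← sum_range_add_sum_Ico _ hJ]
    exact add_le_add ih (norm_sub_le_sum_Ico_norm_sub a hJ)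

lemma dyadicSquareSum_le (a : ℕ → E) (S : ℕ) :
    dyadicSquareSum a S ≤ (S + 2) * variationNorm a (2 ^ S) ^ 2 := by
  have hscale : ∀ i ∈ range (S + 1),
      ∑ j ∈ range (2 ^ (S - i)), ‖a ((j + 1) * 2 ^ i) - a (j * 2 ^ i)‖ ^ 2 ≤
        variationNorm a (2 ^ S) ^ 2 := by
    intro i hi
    have hpow : 2 ^ (S - i) * 2 ^ i = 2 ^ S := by
      rw [← pow_add, Nat.sub_add_cancel (Nat.lt_succ_iff.1 (mem_range.1 hi))]
    refine (sum_sq_le_sq_sum_of_nonneg fun _ _ => norm_nonneg _).trans ?_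
    gcongr
    refine (sum_norm_sub_mul_le a _ _).trans ?_
    rw [hpow]
    exact le_add_of_nonneg_left (norm_nonneg _)
  have h0 : ‖a 0‖ ^ 2 ≤ variationNorm a (2 ^ S) ^ 2 := by
    gcongr
    exact norm_le_variationNorm a (Nat.zero_le _)
  have hsum := sum_le_card_nsmul _ _ _ hscale
  rw [card_range, nsmul_eq_mul] at hsum
  push_cast at hsum
  unfold dyadicSquareSum
  linarith

end Variation

section Fourier

open Finset MeasureTheory

lemma norm_exp_two_pi_I_mul (ξ : ℝ) (n : ℤ) :
    ‖Complex.exp (2 * Real.pi * Complex.I * ξ * n)‖ = 1 := by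
  have : (2 * Real.pi * Complex.I * ξ * n : ℂ) = (2 * Real.pi * ξ * n : ℝ) * Complex.I := by
    push_cast; ring
  rw [this, Complex.norm_exp_ofReal_mul_I]

lemma norm_exp_neg_two_pi_I_mul (ξ : ℝ) (n : ℤ) :
    ‖Complex.exp (-(2 * Real.pi * Complex.I * ξ * n))‖ = 1 := by
  rw [Complex.exp_neg, norm_inv, norm_exp_two_pi_I_mul, inv_one]

lemma integral_exp_two_pi_I_mul (m : ℤ) :
    ∫ ξ in (0 : ℝ)..1, Complex.exp (2 * Real.pi * Complex.I * ξ * m) = if m = 0 then 1 else 0 := by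
  split_ifs with hm
  · simp [hm]
  · have hc : (2 * Real.pi * Complex.I * m : ℂ) ≠ 0 := by simp [hm, Real.pi_ne_zero]
    have hcomm (ξ : ℝ) : (2 * Real.pi * Complex.I * ξ * m : ℂ) =
        2 * Real.pi * Complex.I * m * ξ := by
      ring
    have hone : Complex.exp (2 * Real.pi * Complex.I * m) = 1 :=
      Complex.exp_eq_one_iff.2 ⟨m, by ring⟩
    simp only [hcomm]
    rw [integral_exp_mul_complex hc]
    simp [hone]

lemma FinvInt_eq_fourierCoeffOn (F : ℝ → ℂ) (x : ℤ) :
    FinvInt F x = fourierCoeffOn zero_lt_one F (-x) := by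
  rw [fourierCoeffOn_eq_integral]
  simp only [FinvInt, sub_zero, div_one, one_smul, neg_neg, fourier_coe_apply, smul_eq_mul,
    Complex.ofReal_one, mul_right_comm _ (x : ℂ), mul_comm (F _)]

lemma hasSum_norm_FinvInt_sq {F : ℝ → ℂ} (hF : MemLp F 2 (volume.restrict (Set.Ioc 0 1))) :
    HasSum (fun x : ℤ => ‖FinvInt F x‖ ^ 2) (∫ ξ in (0 : ℝ)..1, ‖F ξ‖ ^ 2) := by
  have h := (Equiv.neg ℤ).hasSum_iff.2 (hasSum_sq_fourierCoeffOn zero_lt_one hF)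
  simpa only [Function.comp_def, Equiv.neg_apply, ← FinvInt_eq_fourierCoeffOn, sub_zero, inv_one,
    one_smul] using h

lemma FinvInt_sub {F G : ℝ → ℂ} (hF : MemLp F 2 (volume.restrict (Set.Ioc 0 1)))
    (hG : MemLp G 2 (volume.restrict (Set.Ioc 0 1))) (x : ℤ) :
    FinvInt F x - FinvInt G x = FinvInt (fun ξ => F ξ - G ξ) x := by
  have hint {H : ℝ → ℂ} (hH : MemLp H 2 (volume.restrict (Set.Ioc 0 1))) :
      IntervalIntegrable (fun ξ => H ξ * Complex.exp (2 * Real.pi * Complex.I * ξ * x))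
        volume 0 1 := by
    rw [intervalIntegrable_iff_integrableOn_Ioc_of_le zero_le_one]
    exact (hH.integrable one_le_two).mul_bdd (c := 1) (by fun_prop)
      (ae_of_all _ fun ξ => (norm_exp_two_pi_I_mul ξ x).le)
  simp only [FinvInt, sub_mul, intervalIntegral.integral_sub (hint hF) (hint hG)]

variable {f : ℤ → ℂ}

lemma hasSum_fhat (hf : Summable f) (ξ : ℝ) :
    HasSum (fun n : ℤ => f n * Complex.exp (-(2 * Real.pi * Complex.I * ξ * n))) (fhat f ξ) :=
  (Summable.of_norm_bounded hf.norm fun n => by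
    rw [norm_mul, norm_exp_neg_two_pi_I_mul, mul_one]).hasSum

lemma continuous_fhat (hf : Summable f) : Continuous (fhat f) :=
  continuous_tsum (fun n => by fun_prop) hf.norm fun n ξ => by
    rw [norm_mul, norm_exp_neg_two_pi_I_mul, mul_one]

lemma norm_fhat_le (hf : Summable f) (ξ : ℝ) : ‖fhat f ξ‖ ≤ ∑' n, ‖f n‖ :=
  tsum_of_norm_bounded hf.norm.hasSum fun n => by
    rw [norm_mul, norm_exp_neg_two_pi_I_mul, mul_one]

lemma memLp_fhat (hf : Summable f) : MemLp (fhat f) 2 (volume.restrict (Set.Ioc 0 1)) :=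
  .of_bound (continuous_fhat hf).aestronglyMeasurable _ (ae_of_all _ (norm_fhat_le hf))

lemma FinvInt_fhat (hf : Summable f) (x : ℤ) : FinvInt (fhat f) x = f x := by
  have hnorm (n : ℤ) (ξ : ℝ) : ‖f n * Complex.exp (-(2 * Real.pi * Complex.I * ξ * n)) *
      Complex.exp (2 * Real.pi * Complex.I * ξ * x)‖ = ‖f n‖ := by
    rw [norm_mul, norm_mul, norm_exp_neg_two_pi_I_mul, norm_exp_two_pi_I_mul, mul_one, mul_one]
  have hterm (n : ℤ) : ∫ ξ in (0 : ℝ)..1, f n * Complex.exp (-(2 * Real.pi * Complex.I * ξ * n)) *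
      Complex.exp (2 * Real.pi * Complex.I * ξ * x) = if n = x then f x else 0 := by
    have hexp (ξ : ℝ) : f n * Complex.exp (-(2 * Real.pi * Complex.I * ξ * n)) *
        Complex.exp (2 * Real.pi * Complex.I * ξ * x) =
          f n * Complex.exp (2 * Real.pi * Complex.I * ξ * (x - n : ℤ)) := by
      rw [mul_assoc, ← Complex.exp_add]
      push_cast
      ring_nf
    simp only [hexp, intervalIntegral.integral_const_mul, integral_exp_two_pi_I_mul, sub_eq_zero,
      eq_comm (a := x), mul_ite, mul_one, mul_zero]
    exact ite_congr rfl (congrArg f ·) fun _ => rfl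
  have hsum := intervalIntegral.hasSum_integral_of_dominated_convergence (μ := volume)
    (a := 0) (b := 1) (F := fun n ξ => f n * Complex.exp (-(2 * Real.pi * Complex.I * ξ * n)) *
      Complex.exp (2 * Real.pi * Complex.I * ξ * x)) (fun n _ => ‖f n‖)
    (fun n => by fun_prop) (fun n => ae_of_all _ fun ξ _ => (hnorm n ξ).le)
    (ae_of_all _ fun ξ _ => hf.norm) intervalIntegrable_const
    (ae_of_all _ fun ξ _ => (hasSum_fhat hf ξ).mul_right _)
  simp only [hterm] at hsum
  exact hsum.unique (hasSum_ite_eq x (f x))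

lemma tsum_norm_sq_eq_integral_fhat (hf : Summable f) :
    ∑' x, ‖f x‖ ^ 2 = ∫ ξ in (0 : ℝ)..1, ‖fhat f ξ‖ ^ 2 := by
  simpa only [FinvInt_fhat hf] using (hasSum_norm_FinvInt_sq (memLp_fhat hf)).tsum_eq

end Fourier

section MaximalInequality

open Finset MeasureTheory

lemma intervalIntegrable_fun_sum {ι : Type*} (s : Finset ι) {F : ι → ℝ → ℝ} {a b : ℝ}
    (hF : ∀ i ∈ s, IntervalIntegrable (F i) volume a b) :
    IntervalIntegrable (fun ξ => ∑ i ∈ s, F i ξ) volume a b := by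
  simpa only [sum_fn] using IntervalIntegrable.sum s hF

lemma intervalIntegrable_norm_sq {F : ℝ → ℂ} (hF : MemLp F 2 (volume.restrict (Set.Ioc 0 1))) :
    IntervalIntegrable (fun ξ => ‖F ξ‖ ^ 2) volume 0 1 := by
  rw [intervalIntegrable_iff_integrableOn_Ioc_of_le zero_le_one]
  exact (memLp_two_iff_integrable_sq_norm hF.aestronglyMeasurable).1 hF

variable {G : ℕ → ℝ → ℂ}

lemma intervalIntegrable_dyadicSquareSum
    (hG : ∀ n, MemLp (G n) 2 (volume.restrict (Set.Ioc 0 1))) (S : ℕ) :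
    IntervalIntegrable (fun ξ => dyadicSquareSum (G · ξ) S) volume 0 1 :=
  (intervalIntegrable_norm_sq (hG 0)).add <|
    intervalIntegrable_fun_sum _ fun _ _ => intervalIntegrable_fun_sum _ fun _ _ =>
      intervalIntegrable_norm_sq ((hG _).sub (hG _))

lemma hasSum_dyadicSquareSum_FinvInt
    (hG : ∀ n, MemLp (G n) 2 (volume.restrict (Set.Ioc 0 1))) (S : ℕ) :
    HasSum (fun x : ℤ => dyadicSquareSum (fun n => FinvInt (G n) x) S)
      (∫ ξ in (0 : ℝ)..1, dyadicSquareSum (G · ξ) S) := by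
  have hinc (m n : ℕ) := (hG m).sub (hG n)
  have hint (m n : ℕ) : IntervalIntegrable (fun ξ => ‖G m ξ - G n ξ‖ ^ 2) volume 0 1 :=
    intervalIntegrable_norm_sq (hinc m n)
  have hrow (i : ℕ) : IntervalIntegrable (fun ξ => ∑ j ∈ range (2 ^ (S - i)),
      ‖G ((j + 1) * 2 ^ i) ξ - G (j * 2 ^ i) ξ‖ ^ 2) volume 0 1 :=
    intervalIntegrable_fun_sum _ fun _ _ => hint _ _
  simp only [dyadicSquareSum, FinvInt_sub (hG _) (hG _)]
  rw [intervalIntegral.integral_add (intervalIntegrable_norm_sq (hG 0))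
    (intervalIntegrable_fun_sum _ fun i _ => hrow i),
    intervalIntegral.integral_finsetSum fun i _ => hrow i]
  refine (hasSum_norm_FinvInt_sq (hG 0)).add (hasSum_sum fun i _ => ?_)
  rw [intervalIntegral.integral_finsetSum fun j _ => hint _ _]
  exact hasSum_sum fun j _ => hasSum_norm_FinvInt_sq (hinc _ _)

lemma iSup_norm_sq_le_mul_dyadicSquareSum {E : Type*} [SeminormedAddCommGroup E] (a : ℕ → E)
    (S : ℕ) : (⨆ n : Fin (2 ^ S + 1), ‖a n‖) ^ 2 ≤ (S + 2) * dyadicSquareSum a S := by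
  obtain ⟨n, hn⟩ := exists_eq_ciSup_of_finite (f := fun n : Fin (2 ^ S + 1) => ‖a n‖)
  rw [← hn]
  exact norm_sq_le_mul_dyadicSquareSum a n.is_le

lemma tsum_iSup_norm_FinvInt_sq_le (hG : ∀ n, MemLp (G n) 2 (volume.restrict (Set.Ioc 0 1)))
    {V : ℝ → ℝ} (hV : MemLp V 2 (volume.restrict (Set.Ioc 0 1))) (S : ℕ)
    (hGV : ∀ ξ, variationNorm (G · ξ) (2 ^ S) ≤ V ξ) :
    ∑' x : ℤ, (⨆ n : Fin (2 ^ S + 1), ‖FinvInt (G n) x‖) ^ 2 ≤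
      (S + 2) ^ 2 * ∫ ξ in (0 : ℝ)..1, V ξ ^ 2 := by
  have hpoint (x : ℤ) := iSup_norm_sq_le_mul_dyadicSquareSum (fun n => FinvInt (G n) x) S
  have hsum := (hasSum_dyadicSquareSum_FinvInt hG S).mul_left (S + 2 : ℝ)
  have hVint : IntervalIntegrable (fun ξ => V ξ ^ 2) volume 0 1 := by
    rw [intervalIntegrable_iff_integrableOn_Ioc_of_le zero_le_one]
    exact hV.integrable_sq
  calc ∑' x : ℤ, (⨆ n : Fin (2 ^ S + 1), ‖FinvInt (G n) x‖) ^ 2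
      ≤ ∑' x : ℤ, (S + 2) * dyadicSquareSum (fun n => FinvInt (G n) x) S :=
        (hsum.summable.of_nonneg_of_le (fun _ => by positivity) hpoint).tsum_le_tsum hpoint
          hsum.summable
    _ = (S + 2) * ∫ ξ in (0 : ℝ)..1, dyadicSquareSum (G · ξ) S := hsum.tsum_eq
    _ ≤ (S + 2) * ∫ ξ in (0 : ℝ)..1, (S + 2) * V ξ ^ 2 := by
        gcongr
        refine intervalIntegral.integral_mono_on zero_le_one
          (intervalIntegrable_dyadicSquareSum hG S) (hVint.const_mul _) fun ξ _ => ?_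
        refine (dyadicSquareSum_le _ S).trans ?_
        gcongr
        · exact variationNorm_nonneg _ _
        · exact hGV ξ
    _ = (S + 2) ^ 2 * ∫ ξ in (0 : ℝ)..1, V ξ ^ 2 := by
        rw [intervalIntegral.integral_const_mul]; ring

lemma sqrt_tsum_iSup_norm_multiplier_sq_le {m : ℕ → ℝ → ℂ} (hm : ∀ n, Measurable (m n)) {D : ℝ}
    (hD : ∀ ξ N, variationNorm (m · ξ) N ≤ D) {f : ℤ → ℂ} (hf : Summable f) (S : ℕ) :
    √(∑' x : ℤ, (⨆ n : Fin (2 ^ S + 1), ‖FinvInt (fun ξ => m n ξ * fhat f ξ) x‖) ^ 2) ≤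
      (S + 2) * D * √(∑' x, ‖f x‖ ^ 2) := by
  have hD0 : 0 ≤ D := (variationNorm_nonneg _ _).trans (hD 0 0)
  have hf2 := memLp_fhat hf
  have hbound (ξ : ℝ) : variationNorm (fun n => m n ξ * fhat f ξ) (2 ^ S) ≤ D * ‖fhat f ξ‖ := by
    rw [variationNorm_mul_const]
    exact mul_le_mul_of_nonneg_right (hD ξ _) (norm_nonneg _)
  have hG (n : ℕ) : MemLp (fun ξ => m n ξ * fhat f ξ) 2 (volume.restrict (Set.Ioc 0 1)) :=
    hf2.of_le_mul ((hm n).aestronglyMeasurable.mul hf2.aestronglyMeasurable) <|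
      ae_of_all _ fun ξ => by
        rw [norm_mul]
        exact mul_le_mul_of_nonneg_right ((norm_le_variationNorm (m · ξ) le_rfl).trans (hD ξ n))
          (norm_nonneg _)
  refine Real.sqrt_le_iff.2 ⟨by positivity, ?_⟩
  refine (tsum_iSup_norm_FinvInt_sq_le hG (hf2.norm.const_mul D) S hbound).trans_eq ?_
  simp only [mul_pow, intervalIntegral.integral_const_mul, ← tsum_norm_sq_eq_integral_fhat hf]
  rw [Real.sq_sqrt (tsum_nonneg fun _ => by positivity)]
  ring

end MaximalInequality

section Totient

open Finset

lemma prod_le_card_add_one_mul_prod_sub_one {s : Finset ℕ} (hs : ∀ p ∈ s, 2 ≤ p) :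
    ∏ p ∈ s, p ≤ (#s + 1) * ∏ p ∈ s, (p - 1) := by
  induction s using Finset.induction_on_max with
  | empty => simp
  | insert a s ha ih =>
    have hnotMem : a ∉ s := fun h => lt_irrefl _ (ha a h)
    have ha2 : 2 ≤ a := hs a (mem_insert_self a s)
    have hs2 : ∀ p ∈ s, 2 ≤ p := fun p hp => hs p (mem_insert_of_mem hp)
    have hcard : #s + 2 ≤ a := by
      have h := card_le_card fun p hp => mem_Ico.2 ⟨hs2 p hp, ha p hp⟩
      rw [Nat.card_Ico] at h
      omega
    have hmax : a * (#s + 1) ≤ (#s + 2) * (a - 1) := by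
      obtain ⟨b, rfl⟩ := Nat.exists_eq_add_of_le' (one_le_two.trans ha2)
      rw [Nat.add_sub_cancel]
      linarith
    rw [prod_insert hnotMem, prod_insert hnotMem, card_insert_of_notMem hnotMem]
    calc a * ∏ p ∈ s, p ≤ a * ((#s + 1) * ∏ p ∈ s, (p - 1)) := Nat.mul_le_mul_left _ (ih hs2)
      _ = a * (#s + 1) * ∏ p ∈ s, (p - 1) := (mul_assoc _ _ _).symm
      _ ≤ (#s + 2) * (a - 1) * ∏ p ∈ s, (p - 1) := Nat.mul_le_mul_right _ hmax
      _ = _ := mul_assoc _ _ _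

lemma card_primeFactors_le_log (n : ℕ) : #n.primeFactors ≤ Nat.log 2 n := by
  rcases eq_or_ne n 0 with rfl | hn
  · simp
  · refine Nat.le_log_of_pow_le one_lt_two ?_
    exact (pow_card_le_prod _ _ _ fun p hp => (Nat.prime_of_mem_primeFactors hp).two_le).trans
      (Nat.le_of_dvd (Nat.pos_of_ne_zero hn) (Nat.prod_primeFactors_dvd n))

lemma le_log_add_one_mul_totient (n : ℕ) : n ≤ (Nat.log 2 n + 1) * n.totient := by
  have hprime (p : ℕ) (hp : p ∈ n.primeFactors) : 2 ≤ p :=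
    (Nat.prime_of_mem_primeFactors hp).two_le
  have hpos : 0 < ∏ p ∈ n.primeFactors, (p - 1) :=
    prod_pos fun p hp => Nat.sub_pos_of_lt (hprime p hp)
  refine Nat.le_of_mul_le_mul_right ?_ hpos
  calc n * ∏ p ∈ n.primeFactors, (p - 1)
      = n.totient * ∏ p ∈ n.primeFactors, p := (Nat.totient_mul_prod_primeFactors n).symm
    _ ≤ n.totient * ((#n.primeFactors + 1) * ∏ p ∈ n.primeFactors, (p - 1)) :=
        Nat.mul_le_mul_left _ (prod_le_card_add_one_mul_prod_sub_one hprime)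
    _ ≤ n.totient * ((Nat.log 2 n + 1) * ∏ p ∈ n.primeFactors, (p - 1)) := by
        gcongr
        exact card_primeFactors_le_log n
    _ = _ := by ring

end Totient

section GaussSum

open Finset

variable {R : Type*} [CommRing R] [Fintype R]

lemma sum_norm_sq_sum_mul_addChar {ψ : AddChar R ℂ} (hψ : ψ.IsPrimitive) (f : R → ℂ) :
    ∑ a, ‖∑ r, f r * ψ (a * r)‖ ^ 2 = Fintype.card R * ∑ r, ‖f r‖ ^ 2 := by
  classical
  have hexpand (a : R) : (‖∑ r, f r * ψ (a * r)‖ : ℂ) ^ 2 =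
      ∑ r, ∑ t, f r * starRingEnd ℂ (f t) * ψ (a * (r - t)) := by
    rw [← Complex.mul_conj', map_sum, sum_mul_sum]
    refine sum_congr rfl fun r _ => sum_congr rfl fun t _ => ?_
    rw [map_mul (starRingEnd ℂ), ← AddChar.map_neg_eq_conj, mul_mul_mul_comm,
      ← AddChar.map_add_eq_mul, mul_sub, sub_eq_add_neg]
  have hcomplex : ∑ a, (‖∑ r, f r * ψ (a * r)‖ : ℂ) ^ 2 =
      Fintype.card R * ∑ r, (‖f r‖ : ℂ) ^ 2 := by
    calc ∑ a, (‖∑ r, f r * ψ (a * r)‖ : ℂ) ^ 2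
        = ∑ r, ∑ t, f r * starRingEnd ℂ (f t) * ∑ a, ψ (a * (r - t)) := by
          simp only [hexpand, mul_sum]
          rw [sum_comm]
          exact sum_congr rfl fun r _ => sum_comm
      _ = ∑ r, (‖f r‖ : ℂ) ^ 2 * Fintype.card R := by
          simp [AddChar.sum_mulShift _ hψ, sub_eq_zero, Complex.mul_conj']
      _ = _ := by rw [← sum_mul, mul_comm]
  exact_mod_cast hcomplex

lemma sum_norm_mulChar_sq [DecidableEq R] (χ : MulChar R ℂ) :
    ∑ r, ‖χ r‖ ^ 2 = Fintype.card Rˣ := by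
  have hterm (r : R) : (‖χ r‖ : ℂ) ^ 2 = (1 : MulChar R ℂ) r := by
    rw [← Complex.mul_conj', ← RCLike.star_def, MulChar.star_apply', ← MulChar.mul_apply,
      mul_inv_cancel]
  have h : ∑ r, (‖χ r‖ : ℂ) ^ 2 = Fintype.card Rˣ := by
    simp only [hterm, MulChar.sum_one_eq_card_units]
  exact_mod_cast h

lemma norm_gaussSum_mulShift (χ : MulChar R ℂ) (ψ : AddChar R ℂ) (u : Rˣ) :
    ‖gaussSum χ (ψ.mulShift u)‖ = ‖gaussSum χ ψ‖ := by
  classical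
  have hχ : ‖χ u‖ = 1 :=
    Complex.norm_eq_one_of_mem_rootsOfUnity (χ.apply_mem_rootsOfUnity u)
  rw [← gaussSum_mulShift χ ψ u, norm_mul, hχ, one_mul]

-- Parseval bounds the mean of `|gaussSum χ (ψ.mulShift a)|²` over all `a`, and this quantity is
-- constant on the units.
lemma norm_gaussSum_sq_le (χ : MulChar R ℂ) {ψ : AddChar R ℂ} (hψ : ψ.IsPrimitive) :
    ‖gaussSum χ ψ‖ ^ 2 ≤ Fintype.card R := by
  classical
  have hpos : (0 : ℝ) < Fintype.card Rˣ := by exact_mod_cast Fintype.card_pos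
  refine le_of_mul_le_mul_left ?_ hpos
  calc Fintype.card Rˣ * ‖gaussSum χ ψ‖ ^ 2
      = ∑ u : Rˣ, ‖gaussSum χ (ψ.mulShift u)‖ ^ 2 := by simp [norm_gaussSum_mulShift]
    _ = ∑ a ∈ univ.map ⟨((↑) : Rˣ → R), Units.val_injective⟩,
          ‖gaussSum χ (ψ.mulShift a)‖ ^ 2 := by rw [sum_map]; rfl
    _ ≤ ∑ a, ‖gaussSum χ (ψ.mulShift a)‖ ^ 2 :=
        sum_le_sum_of_subset_of_nonneg (subset_univ _) fun _ _ _ => by positivity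
    _ = Fintype.card R * ∑ r, ‖χ r‖ ^ 2 := sum_norm_sq_sum_mul_addChar hψ χ
    _ = Fintype.card Rˣ * Fintype.card R := by rw [sum_norm_mulChar_sq, mul_comm]

lemma sum_Icc_natCast_zmod {M : Type*} [AddCommMonoid M] (q : ℕ) [NeZero q] (F : ZMod q → M) :
    ∑ r ∈ Icc 1 q, F r = ∑ r, F r := by
  obtain ⟨n, rfl⟩ := Nat.exists_eq_succ_of_ne_zero (NeZero.ne q)
  calc ∑ r ∈ Icc 1 (n + 1), F r = ∑ r ∈ range (n + 1), F (r + 1 : ℕ) := by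
        rw [range_eq_Ico, sum_Ico_add' (fun r : ℕ => F r)]
        rfl
    _ = ∑ r ∈ range (n + 1), F r := by
        rw [sum_range_succ, sum_range_succ', ZMod.natCast_self, Nat.cast_zero]
    _ = ∑ i : Fin (n + 1), F (i : ℕ) := (Fin.sum_univ_eq_sum_range (fun r : ℕ => F r) _).symm
    _ = ∑ r, F r := sum_congr rfl fun i _ => congrArg F (Fin.cast_val_eq_self i)

lemma gaussG_eq_gaussSum (q : ℕ) [NeZero q] (χ : DirichletCharacter ℂ q) (a : ℤ) :
    gaussG q χ a = (q.totient : ℂ)⁻¹ * gaussSum χ (ZMod.stdAddChar.mulShift (a : ZMod q)) := by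
  have hnonunit : ∀ r ∈ Icc 1 q, χ r * ZMod.stdAddChar (a * r : ZMod q) ≠ 0 → r.Coprime q := by
    intro r _ hr
    by_contra hcop
    rw [← ZMod.isUnit_iff_coprime] at hcop
    exact hr (by rw [χ.map_nonunit hcop, zero_mul])
  have hexp (r : ℕ) : Complex.exp (2 * Real.pi * Complex.I * r * a / q) =
      ZMod.stdAddChar (a * r : ZMod q) := by
    have h := ZMod.stdAddChar_coe (N := q) (a * r)
    push_cast at h
    rw [h]
    ring_nf
  simp only [gaussG, hexp, Aq, gaussSum, AddChar.mulShift_apply]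
  rw [sum_filter_of_ne hnonunit,
    sum_Icc_natCast_zmod q fun r => χ r * ZMod.stdAddChar (a * r : ZMod q)]

lemma norm_gaussG_le {q : ℕ} [NeZero q] (χ : DirichletCharacter ℂ q) {a : ℕ}
    (ha : a.Coprime q) : ‖gaussG q χ a‖ ≤ (Nat.log 2 q + 1) / √q := by
  have hq : (0 : ℝ) < q := by exact_mod_cast NeZero.pos q
  have htotient : (0 : ℝ) < q.totient := by exact_mod_cast Nat.totient_pos.2 (NeZero.pos q)
  have hgauss : ‖gaussSum χ (ZMod.stdAddChar.mulShift (a : ZMod q))‖ ≤ √q := by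
    rw [← ZMod.coe_unitOfCoprime a ha, norm_gaussSum_mulShift]
    refine Real.le_sqrt_of_sq_le ((norm_gaussSum_sq_le χ (ZMod.isPrimitive_stdAddChar q)).trans ?_)
    rw [ZMod.card]
  have hlog : (q : ℝ) ≤ (Nat.log 2 q + 1) * q.totient := by
    exact_mod_cast le_log_add_one_mul_totient q
  rw [gaussG_eq_gaussSum, Int.cast_natCast, norm_mul, norm_inv, Complex.norm_natCast,
    inv_mul_eq_div, div_le_div_iff₀ htotient (Real.sqrt_pos.2 hq)]
  calc ‖gaussSum χ (ZMod.stdAddChar.mulShift (a : ZMod q))‖ * √q ≤ √q * √q := by gcongr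
    _ = q := Real.mul_self_sqrt hq.le
    _ ≤ _ := hlog

end GaussSum

section DyadicAverages

open Finset

lemma norm_pow_sub_one_le {R : Type*} [NormedRing R] [NormOneClass R] {z : R} (hz : ‖z‖ ≤ 1)
    (n : ℕ) : ‖z ^ n - 1‖ ≤ n * ‖z - 1‖ := by
  rw [← geom_sum_mul]
  refine (norm_mul_le _ _).trans (mul_le_mul_of_nonneg_right ?_ (norm_nonneg _))
  refine (norm_sum_le_of_le (range n) (n := fun _ => 1) fun i _ => ?_).trans_eq (by simp)
  exact (norm_pow_le _ _).trans (pow_le_one₀ (norm_nonneg _) hz)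

lemma norm_sum_mul_pow_mul_sub_one_le {w : ℕ → ℝ} (hw : Antitone w) (hw0 : ∀ n, 0 ≤ w n) {z : ℂ}
    (hz : ‖z‖ ≤ 1) (N : ℕ) : ‖(∑ n ∈ range N, w n * z ^ n) * (z - 1)‖ ≤ 2 * w 0 := by
  have hterm {c : ℝ} (hc : 0 ≤ c) (n : ℕ) : ‖c * z ^ n‖ ≤ c := by
    rw [norm_mul, norm_pow, Complex.norm_of_nonneg hc]
    exact mul_le_of_le_one_right hc (pow_le_one₀ (norm_nonneg _) hz)
  have habel : ‖(∑ n ∈ range N, w n * z ^ n) * (z - 1) - w N * z ^ N‖ ≤ 2 * w 0 - w N := by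
    induction N with
    | zero =>
      rw [sum_range_zero, zero_mul, zero_sub, norm_neg, two_mul, add_sub_cancel_right]
      exact hterm (hw0 0) 0
    | succ N ih =>
      calc ‖(∑ n ∈ range (N + 1), w n * z ^ n) * (z - 1) - w (N + 1) * z ^ (N + 1)‖
          = ‖((∑ n ∈ range N, w n * z ^ n) * (z - 1) - w N * z ^ N) +
              ((w N - w (N + 1) : ℝ) : ℂ) * z ^ (N + 1)‖ := by
            rw [sum_range_succ, Complex.ofReal_sub]
            congr 1
            ring
        _ ≤ (2 * w 0 - w N) + (w N - w (N + 1)) :=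
            norm_add_le_of_le ih (hterm (sub_nonneg.2 (hw N.le_succ)) _)
        _ = 2 * w 0 - w (N + 1) := by ring
  calc ‖(∑ n ∈ range N, w n * z ^ n) * (z - 1)‖
      = ‖((∑ n ∈ range N, w n * z ^ n) * (z - 1) - w N * z ^ N) + w N * z ^ N‖ := by
        rw [sub_add_cancel]
    _ ≤ (2 * w 0 - w N) + w N := norm_add_le_of_le habel (hterm (hw0 N) N)
    _ = 2 * w 0 := sub_add_cancel _ _

lemma norm_sum_mul_pow_sub_sum_le {w : ℕ → ℝ} (hw0 : ∀ n, 0 ≤ w n) {z : ℂ} (hz : ‖z‖ ≤ 1)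
    (N : ℕ) : ‖∑ n ∈ range N, w n * z ^ (n + 1) - ∑ n ∈ range N, (w n : ℂ)‖ ≤
      (∑ n ∈ range N, w n) * (N * ‖z - 1‖) := by
  rw [← sum_sub_distrib, sum_mul]
  refine norm_sum_le_of_le _ fun n hn => ?_
  have hnN : ((n + 1 : ℕ) : ℝ) ≤ N := by exact_mod_cast mem_range.1 hn
  rw [← mul_sub_one, norm_mul, Complex.norm_of_nonneg (hw0 n)]
  exact mul_le_mul_of_nonneg_left ((norm_pow_sub_one_le hz _).trans (by gcongr)) (hw0 n)

/-- The weights of the average `Mhat β`, indexed from `0`. -/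
noncomputable def powWeight (β : ℝ) (n : ℕ) : ℝ :=
  (((n + 1 : ℕ) : ℝ) ^ β - (n : ℝ) ^ β) / β

variable {β : ℝ}

lemma powWeight_zero (hβ : 0 < β) : powWeight β 0 = β⁻¹ := by
  simp [powWeight, Real.zero_rpow hβ.ne']

lemma powWeight_nonneg (hβ : 0 < β) (n : ℕ) : 0 ≤ powWeight β n := by
  refine div_nonneg (sub_nonneg.2 ?_) hβ.le
  gcongr
  exact n.le_succ

lemma powWeight_antitone (hβ : 0 < β) (hβ1 : β ≤ 1) : Antitone (powWeight β) := by
  refine antitone_nat_of_succ_le fun n => div_le_div_of_nonneg_right ?_ hβ.le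
  have hmid := (Real.concaveOn_rpow hβ.le hβ1).2 (x := n) (y := (n + 1 + 1 : ℕ))
    (Set.mem_Ici.2 (Nat.cast_nonneg _)) (Set.mem_Ici.2 (Nat.cast_nonneg _))
    (by norm_num : (0 : ℝ) ≤ 1 / 2) (by norm_num : (0 : ℝ) ≤ 1 / 2) (by norm_num)
  have hmean : (1 / 2 : ℝ) • (n : ℝ) + (1 / 2 : ℝ) • ((n + 1 + 1 : ℕ) : ℝ) = (n + 1 : ℕ) := by
    push_cast
    rw [smul_eq_mul, smul_eq_mul]
    ring
  rw [hmean, smul_eq_mul, smul_eq_mul] at hmid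
  linarith

lemma sum_powWeight (hβ : 0 < β) (N : ℕ) : ∑ n ∈ range N, powWeight β n = N ^ β / β := by
  simp only [powWeight]
  rw [← sum_div, sum_range_sub fun n : ℕ => (n : ℝ) ^ β, Nat.cast_zero, Real.zero_rpow hβ.ne',
    sub_zero]

lemma Mhat_eq_sum_powWeight (β : ℝ) (N : ℕ) (ξ : ℝ) :
    Mhat β N ξ = (N : ℂ)⁻¹ *
      ∑ n ∈ range N, powWeight β n * Complex.exp (2 * Real.pi * Complex.I * ξ) ^ (n + 1) := by
  rw [Mhat, range_eq_Ico, ← Ico_add_one_right_eq_Icc]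
  refine congrArg _ ((sum_Ico_add' _ 0 N 1).symm.trans (sum_congr rfl fun n _ => ?_))
  rw [← Complex.exp_nat_mul, powWeight, Nat.cast_add_one, Nat.cast_add_one, add_sub_cancel_right]
  ring_nf

lemma continuous_Mhat (β : ℝ) (N : ℕ) : Continuous (Mhat β N) := by
  unfold Mhat
  fun_prop

lemma norm_exp_two_pi_I (ξ : ℝ) : ‖Complex.exp (2 * Real.pi * Complex.I * ξ)‖ = 1 := by
  simpa using norm_exp_two_pi_I_mul ξ 1

lemma norm_Mhat_sub_le (hβ : 0 < β) (hβ1 : β ≤ 1) {N : ℕ} (hN : 1 ≤ N) (ξ : ℝ) :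
    ‖Mhat β N ξ - ((N ^ (β - 1) / β : ℝ) : ℂ)‖ ≤
      β⁻¹ * (N * ‖Complex.exp (2 * Real.pi * Complex.I * ξ) - 1‖) := by
  have hN0 : (0 : ℝ) < N := by exact_mod_cast hN
  have hmass : N ^ (β - 1) / β = (N : ℝ)⁻¹ * ∑ n ∈ range N, powWeight β n := by
    rw [sum_powWeight hβ, Real.rpow_sub_one hN0.ne']
    ring
  have hmass_le : (N : ℝ) ^ (β - 1) / β ≤ β⁻¹ := by
    rw [div_eq_mul_inv]
    exact mul_le_of_le_one_left (inv_nonneg.2 hβ.le)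
      (Real.rpow_le_one_of_one_le_of_nonpos (by exact_mod_cast hN) (by linarith))
  refine le_trans ?_ (mul_le_mul_of_nonneg_right hmass_le (by positivity))
  rw [hmass, Mhat_eq_sum_powWeight]
  push_cast
  rw [← mul_sub, norm_mul, norm_inv, Complex.norm_natCast, mul_assoc (N : ℝ)⁻¹]
  refine mul_le_mul_of_nonneg_left ?_ (inv_nonneg.2 hN0.le)
  exact norm_sum_mul_pow_sub_sum_le (powWeight_nonneg hβ) (norm_exp_two_pi_I ξ).le N

lemma norm_Mhat_mul_le (hβ : 0 < β) (hβ1 : β ≤ 1) {N : ℕ} (hN : 1 ≤ N) (ξ : ℝ) :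
    ‖Mhat β N ξ‖ * (N * ‖Complex.exp (2 * Real.pi * Complex.I * ξ) - 1‖) ≤ 2 * β⁻¹ := by
  have hN0 : (N : ℂ) ≠ 0 := by exact_mod_cast (Nat.one_le_iff_ne_zero.1 hN)
  set z := Complex.exp (2 * Real.pi * Complex.I * ξ) with hz
  have hz1 : ‖z‖ = 1 := norm_exp_two_pi_I ξ
  calc ‖Mhat β N ξ‖ * (N * ‖z - 1‖)
      = ‖Mhat β N ξ * (N * (z - 1))‖ := by rw [norm_mul, norm_mul, Complex.norm_natCast]
    _ = ‖z * ((∑ n ∈ range N, powWeight β n * z ^ n) * (z - 1))‖ := by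
        rw [Mhat_eq_sum_powWeight, ← hz]
        simp only [pow_succ, ← mul_assoc, ← sum_mul]
        field_simp
    _ ≤ 2 * powWeight β 0 := by
        rw [norm_mul, hz1, one_mul]
        exact norm_sum_mul_pow_mul_sub_one_le (powWeight_antitone hβ hβ1) (powWeight_nonneg hβ)
          hz1.le N
    _ = 2 * β⁻¹ := by rw [powWeight_zero hβ]

lemma min_self_inv_le {x : ℝ} (hx : 0 ≤ x) :
    min x x⁻¹ ≤ 6 * ((1 + x)⁻¹ - (1 + 2 * x)⁻¹) := by
  have hdiff : 6 * ((1 + x)⁻¹ - (1 + 2 * x)⁻¹) = 6 * x / ((1 + x) * (1 + 2 * x)) := by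
    field_simp
    ring
  rw [hdiff]
  rcases le_or_gt x 1 with h | h
  · refine (min_le_left _ _).trans ?_
    rw [le_div_iff₀ (by positivity)]
    nlinarith [mul_nonneg hx hx]
  · refine (min_le_right _ _).trans ?_
    rw [inv_eq_one_div, div_le_div_iff₀ (by positivity) (by positivity)]
    nlinarith

lemma sum_min_two_pow_mul_inv_le {t : ℝ} (ht : 0 ≤ t) (K : ℕ) :
    ∑ n ∈ range K, min (2 ^ n * t) (2 ^ n * t)⁻¹ ≤ 6 := by
  have hpos (n : ℕ) : 0 ≤ 2 ^ n * t := by positivity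
  calc ∑ n ∈ range K, min (2 ^ n * t) (2 ^ n * t)⁻¹
      ≤ ∑ n ∈ range K, 6 * ((1 + 2 ^ n * t)⁻¹ - (1 + 2 ^ (n + 1) * t)⁻¹) := by
        gcongr with n
        rw [pow_succ', mul_assoc]
        exact min_self_inv_le (hpos n)
    _ = 6 * ((1 + 2 ^ 0 * t)⁻¹ - (1 + 2 ^ K * t)⁻¹) := by
        rw [← mul_sum, sum_range_sub' fun n => (1 + 2 ^ n * t)⁻¹]
    _ ≤ 6 * (1 - 0) := by
        gcongr
        · exact inv_le_one_of_one_le₀ (le_add_of_nonneg_right (hpos 0))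
        · exact inv_nonneg.2 (add_nonneg zero_le_one (hpos K))
    _ = 6 := by norm_num

/-- Monotone model for `n ↦ Mhat β (2 ^ n) ξ`, where `t` stands for `‖e(ξ) - 1‖`: below the
scale `2 ^ n = 1 / t` the average is close to its value at `ξ = 0`, above it close to `0`. -/
noncomputable def truncatedMass (β t : ℝ) (n : ℕ) : ℝ :=
  if 2 ^ n * t ≤ 1 then ((2 ^ n : ℕ) : ℝ) ^ (β - 1) / β else 0

lemma truncatedMass_nonneg (hβ : 0 < β) (t : ℝ) (n : ℕ) : 0 ≤ truncatedMass β t n := by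
  unfold truncatedMass
  positivity

lemma truncatedMass_zero_le (hβ : 0 < β) (t : ℝ) : truncatedMass β t 0 ≤ β⁻¹ := by
  simp only [truncatedMass, pow_zero, Nat.cast_one, Real.one_rpow, one_div]
  split_ifs
  exacts [le_rfl, inv_nonneg.2 hβ.le]

lemma truncatedMass_antitone (hβ : 0 < β) (hβ1 : β ≤ 1) {t : ℝ} (ht : 0 ≤ t) :
    Antitone (truncatedMass β t) := by
  refine antitone_nat_of_succ_le fun n => ?_
  have htwo : 2 ^ n ≤ 2 ^ (n + 1) := Nat.pow_le_pow_right two_pos n.le_succ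
  by_cases h : 2 ^ (n + 1) * t ≤ 1
  · have h' : 2 ^ n * t ≤ 1 :=
      (mul_le_mul_of_nonneg_right (by exact_mod_cast htwo) ht).trans h
    rw [truncatedMass, truncatedMass, if_pos h, if_pos h']
    refine div_le_div_of_nonneg_right ?_ hβ.le
    exact Real.rpow_le_rpow_of_nonpos (by positivity) (by exact_mod_cast htwo) (by linarith)
  · rw [truncatedMass, if_neg h]
    exact truncatedMass_nonneg hβ t n

lemma norm_Mhat_sub_truncatedMass_le (hβ : 0 < β) (hβ1 : β ≤ 1) {ξ t : ℝ}
    (ht : t = ‖Complex.exp (2 * Real.pi * Complex.I * ξ) - 1‖) (n : ℕ) :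
    ‖Mhat β (2 ^ n) ξ - truncatedMass β t n‖ ≤
      2 * β⁻¹ * min (2 ^ n * t) (2 ^ n * t)⁻¹ := by
  have ht0 : 0 ≤ t := ht ▸ norm_nonneg _
  have hx : 0 ≤ 2 ^ n * t := by positivity
  have hcast : ((2 ^ n : ℕ) : ℝ) = 2 ^ n := by push_cast; rfl
  rcases le_or_gt (2 ^ n * t) 1 with h | h
  · have hsmall := norm_Mhat_sub_le hβ hβ1 (Nat.one_le_two_pow (n := n)) ξ
    have hle_inv : 2 ^ n * t ≤ (2 ^ n * t)⁻¹ := by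
      rcases hx.eq_or_lt with h0 | h0
      · rw [← h0, inv_zero]
      · exact h.trans ((one_le_inv₀ h0).2 h)
    rw [← ht, hcast] at hsmall
    rw [truncatedMass, if_pos h, hcast, min_eq_left hle_inv]
    linarith [mul_nonneg (inv_nonneg.2 hβ.le) hx]
  · have hlarge := norm_Mhat_mul_le hβ hβ1 (Nat.one_le_two_pow (n := n)) ξ
    rw [← ht, hcast] at hlarge
    rw [truncatedMass, if_neg h.not_ge, Complex.ofReal_zero, sub_zero,
      min_eq_right ((inv_le_one_of_one_le₀ h.le).trans h.le), ← div_eq_mul_inv,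
      le_div_iff₀ (zero_lt_one.trans h)]
    exact hlarge

lemma variationNorm_Mhat_two_pow_le (hβ : 0 < β) (hβ1 : β ≤ 1) (ξ : ℝ) (N : ℕ) :
    variationNorm (fun n => Mhat β (2 ^ n) ξ) N ≤ 26 * β⁻¹ := by
  set t := ‖Complex.exp (2 * Real.pi * Complex.I * ξ) - 1‖ with ht
  have ht0 : 0 ≤ t := norm_nonneg _
  calc variationNorm (fun n => Mhat β (2 ^ n) ξ) N
      ≤ 2 * truncatedMass β t 0 +
          2 * ∑ n ∈ range (N + 1), ‖Mhat β (2 ^ n) ξ - truncatedMass β t n‖ :=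
        variationNorm_le_of_antitone_approx (truncatedMass_antitone hβ hβ1 ht0)
          (truncatedMass_nonneg hβ t) _ N
    _ ≤ 2 * β⁻¹ + 2 * ∑ n ∈ range (N + 1), 2 * β⁻¹ * min (2 ^ n * t) (2 ^ n * t)⁻¹ := by
        gcongr with n
        · exact truncatedMass_zero_le hβ t
        · exact norm_Mhat_sub_truncatedMass_le hβ hβ1 ht n
    _ ≤ 2 * β⁻¹ + 2 * (2 * β⁻¹ * 6) := by
        rw [← mul_sum]
        gcongr
        exact sum_min_two_pow_mul_inv_le ht0 _
    _ = 26 * β⁻¹ := by ring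

end DyadicAverages

section Cutoff

variable {η : ℝ → ℝ}

lemma etaPer_eq_round (hη : ∀ ξ : ℝ, 1 / 2 ≤ |ξ| → η ξ = 0) (s : ℕ) (ξ : ℝ) :
    etaPer η s ξ = η (2 ^ (4 * s) * (ξ - round ξ)) := by
  refine tsum_eq_single (round ξ) fun k hk => hη _ ?_
  have hint : (1 : ℝ) ≤ |(round ξ : ℝ) - k| := by
    exact_mod_cast Int.one_le_abs (sub_ne_zero.2 hk.symm)
  have hfar : 1 / 2 ≤ |ξ - k| := by
    have htri := abs_sub_le (round ξ : ℝ) ξ k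
    rw [abs_sub_comm (round ξ : ℝ) ξ] at htri
    linarith [abs_sub_round ξ]
  rw [abs_mul, abs_of_pos (by positivity : (0 : ℝ) < 2 ^ (4 * s))]
  exact hfar.trans (le_mul_of_one_le_left (abs_nonneg _) (one_le_pow₀ one_le_two))

lemma measurable_etaPer (hη : ∀ ξ : ℝ, 1 / 2 ≤ |ξ| → η ξ = 0) (hm : Measurable η) (s : ℕ) :
    Measurable (etaPer η s) := by
  have hround : Measurable fun ξ : ℝ => (round ξ : ℝ) := by
    simp only [round_eq]
    fun_prop
  rw [funext (etaPer_eq_round hη s)]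
  exact hm.comp ((measurable_id.sub hround).const_mul _)

lemma abs_etaPer_le_one (hη : ∀ ξ : ℝ, 1 / 2 ≤ |ξ| → η ξ = 0) (hη1 : ∀ ξ, |η ξ| ≤ 1) (s : ℕ)
    (ξ : ℝ) : |etaPer η s ξ| ≤ 1 := by
  rw [etaPer_eq_round hη]
  exact hη1 _

lemma abs_sub_round_lt_of_etaPer_ne_zero (hη : ∀ ξ : ℝ, 1 / 2 ≤ |ξ| → η ξ = 0) {s : ℕ} {ξ : ℝ}
    (h : etaPer η s ξ ≠ 0) : |ξ - round ξ| * 2 ^ (4 * s) < 1 / 2 := by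
  rw [etaPer_eq_round hη] at h
  contrapose! h
  refine hη _ ?_
  rwa [abs_mul, abs_of_pos (by positivity : (0 : ℝ) < 2 ^ (4 * s)), mul_comm]

end Cutoff

section FareySeparation

lemma eq_zero_of_sub_add_mul_eq_zero {x y z m : ℤ} (hx : 0 < x) (hxz : x ≤ z) (hy : 0 < y)
    (hyz : y ≤ z) (h : x - y + m * z = 0) : m = 0 := by
  rw [← Int.abs_lt_one_iff, abs_lt]
  constructor <;> nlinarith

lemma eq_of_abs_div_sub_div_add_mul_lt_one {a q a' q' : ℕ} (ha : 0 < a) (haq : a ≤ q)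
    (hcop : a.Coprime q) (ha' : 0 < a') (haq' : a' ≤ q') (hcop' : a'.Coprime q') {m : ℤ}
    (h : |(a : ℝ) / q - a' / q' + m| * (q * q') < 1) : a = a' ∧ q = q' := by
  have hq : 0 < q := ha.trans_le haq
  have hq' : 0 < q' := ha'.trans_le haq'
  have hzero : (a : ℤ) * q' - a' * q + m * (q * q') = 0 := by
    have hcast : (((a : ℤ) * q' - a' * q + m * (q * q') : ℤ) : ℝ) =
        ((a : ℝ) / q - a' / q' + m) * (q * q') := by
      push_cast
      field_simp
    rw [← Int.abs_lt_one_iff]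
    rw [← abs_of_nonneg (by positivity : (0 : ℝ) ≤ q * q'), ← abs_mul, ← hcast] at h
    exact_mod_cast h
  have hm : m = 0 := eq_zero_of_sub_add_mul_eq_zero (by positivity) (by gcongr) (by positivity)
    (by rw [mul_comm (q : ℤ)]; gcongr) hzero
  have hdiv : ((a : ℤ) : ℚ) / (q : ℤ) = ((a' : ℤ) : ℚ) / (q' : ℤ) := by
    rw [hm, zero_mul, add_zero, sub_eq_zero] at hzero
    rw [div_eq_div_iff (by positivity) (by positivity)]
    exact_mod_cast hzero
  have hinj := Rat.div_int_inj (a := a) (b := q) (c := a') (d := q') (by exact_mod_cast hq)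
    (by exact_mod_cast hq') hcop hcop' hdiv
  exact_mod_cast hinj

lemma mem_Rset {s a q : ℕ} : (a, q) ∈ Rset s ↔ (2 ^ s ≤ q ∧ q < 2 ^ (s + 1)) ∧
    (0 < a ∧ a ≤ q ∧ a.Coprime q) ∧ (Squarefree q ∨ (4 ∣ q ∧ Squarefree (q / 4))) := by
  simp only [Rset, Finset.mem_filter, Finset.mem_product, Finset.mem_range, Nat.succ_le_iff]
  constructor
  · rintro ⟨⟨-, hq⟩, hq', ha, haq, hcop, hsq⟩
    exact ⟨⟨hq', hq⟩, ⟨ha, haq, hcop⟩, hsq⟩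
  · rintro ⟨⟨hq', hq⟩, ⟨ha, haq, hcop⟩, hsq⟩
    exact ⟨⟨haq.trans_lt hq, hq⟩, hq', ha, haq, hcop, hsq⟩

lemma le_four_pow_of_lt_two_pow_succ {q s : ℕ} (hq : q < 2 ^ (s + 1)) : q ≤ 2 ^ (2 * s) := by
  have h : 2 * 2 ^ s ≤ 2 ^ s * 2 ^ s + 1 := by nlinarith [two_mul_le_add_sq (2 ^ s) 1]
  rw [pow_succ] at hq
  rw [two_mul, pow_add]
  omega

lemma eq_of_etaPer_sub_ne_zero {η : ℝ → ℝ} (hη : ∀ ξ : ℝ, 1 / 2 ≤ |ξ| → η ξ = 0) {s : ℕ}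
    {ξ : ℝ} {p p' : ℕ × ℕ} (hp : p ∈ Rset s) (hp' : p' ∈ Rset s)
    (h : etaPer η s (ξ - (p.1 : ℝ) / p.2) ≠ 0) (h' : etaPer η s (ξ - (p'.1 : ℝ) / p'.2) ≠ 0) :
    p = p' := by
  obtain ⟨⟨-, hq⟩, ⟨ha, haq, hcop⟩, -⟩ := mem_Rset.1 hp
  obtain ⟨⟨-, hq'⟩, ⟨ha', haq', hcop'⟩, -⟩ := mem_Rset.1 hp'
  set x := ξ - (p.1 : ℝ) / p.2 with hx
  set x' := ξ - (p'.1 : ℝ) / p'.2 with hx'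
  have hsep : |(p.1 : ℝ) / p.2 - p'.1 / p'.2 + (round x - round x' : ℤ)| * 2 ^ (4 * s) < 1 := by
    have heq : (p.1 : ℝ) / p.2 - p'.1 / p'.2 + (round x - round x' : ℤ) =
        (x' - round x') - (x - round x) := by
      push_cast
      rw [hx, hx']
      ring
    have htri := mul_le_mul_of_nonneg_right (abs_sub (x' - round x') (x - round x))
      (by positivity : (0 : ℝ) ≤ 2 ^ (4 * s))
    rw [heq]
    linarith [abs_sub_round_lt_of_etaPer_ne_zero hη h, abs_sub_round_lt_of_etaPer_ne_zero hη h']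
  have hqq : (p.2 : ℝ) * p'.2 ≤ 2 ^ (4 * s) := by
    have hnat : p.2 * p'.2 ≤ 2 ^ (2 * s) * 2 ^ (2 * s) := Nat.mul_le_mul
      (le_four_pow_of_lt_two_pow_succ hq) (le_four_pow_of_lt_two_pow_succ hq')
    rw [← pow_add, ← two_mul, ← mul_assoc] at hnat
    exact_mod_cast hnat
  have heq := eq_of_abs_div_sub_div_add_mul_lt_one ha haq hcop ha' haq' hcop'
    ((mul_le_mul_of_nonneg_left hqq (abs_nonneg _)).trans_lt hsep)
  exact Prod.ext heq.1 heq.2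

end FareySeparation

section Multiplier

open Finset

/-- The multiplier `L̂_N^{a,q} = G(𝟙_q, a) M̂_N^1 - δ G(χ, a) M̂_N^β` attached to `p = (a, q)`. -/
noncomputable def Lhat (p : ℕ × ℕ) (δ : ℕ) (χ : DirichletCharacter ℂ p.2) (β : ℝ) (N : ℕ)
    (ξ : ℝ) : ℂ :=
  gaussG p.2 1 p.1 * Mhat 1 N ξ - δ * gaussG p.2 χ p.1 * Mhat β N ξ

lemma norm_gaussG_le_of_mem_Rset {s : ℕ} {p : ℕ × ℕ} (hp : p ∈ Rset s)
    (χ : DirichletCharacter ℂ p.2) : ‖gaussG p.2 χ p.1‖ ≤ (s + 1) / √(2 ^ s) := by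
  obtain ⟨⟨hq, hq'⟩, ⟨-, -, hcop⟩, -⟩ := mem_Rset.1 hp
  have : NeZero p.2 := ⟨((Nat.two_pow_pos s).trans_le hq).ne'⟩
  refine (norm_gaussG_le χ hcop).trans ?_
  rw [Nat.log_eq_of_pow_le_of_lt_pow hq hq']
  gcongr
  exact_mod_cast hq

lemma variationNorm_Lhat_two_pow_le {s : ℕ} {p : ℕ × ℕ} (hp : p ∈ Rset s) {δ : ℕ} (hδ : δ ≤ 1)
    (χ : DirichletCharacter ℂ p.2) {β : ℝ} (hβ : 0 < β) (hβ1 : β ≤ 1) (ξ : ℝ) (N : ℕ) :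
    variationNorm (fun n => Lhat p δ χ β (2 ^ n) ξ) N ≤
      26 * (1 + β⁻¹) * ((s + 1) / √(2 ^ s)) := by
  have hδ1 : ‖-(δ : ℂ)‖ ≤ 1 := by
    rw [norm_neg, Complex.norm_natCast]
    exact_mod_cast hδ
  have hG (ψ : DirichletCharacter ℂ p.2) := norm_gaussG_le_of_mem_Rset hp ψ
  have hM1 := variationNorm_Mhat_two_pow_le one_pos le_rfl ξ N
  have hMβ := variationNorm_Mhat_two_pow_le hβ hβ1 ξ N
  calc variationNorm (fun n => Lhat p δ χ β (2 ^ n) ξ) N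
      = variationNorm (fun n => gaussG p.2 1 p.1 * Mhat 1 (2 ^ n) ξ +
          -δ * gaussG p.2 χ p.1 * Mhat β (2 ^ n) ξ) N := by
        simp only [Lhat, sub_eq_add_neg, neg_mul]
    _ ≤ _ := variationNorm_add_le _ _ N
    _ = ‖gaussG p.2 1 p.1‖ * variationNorm (fun n => Mhat 1 (2 ^ n) ξ) N +
          ‖-(δ : ℂ)‖ * ‖gaussG p.2 χ p.1‖ * variationNorm (fun n => Mhat β (2 ^ n) ξ) N := by
        rw [variationNorm_const_mul, variationNorm_const_mul, norm_mul]
    _ ≤ (s + 1) / √(2 ^ s) * (26 * 1⁻¹) + 1 * ((s + 1) / √(2 ^ s)) * (26 * β⁻¹) := by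
        gcongr
        exacts [variationNorm_nonneg _ _, hG 1, variationNorm_nonneg _ _, hG χ]
    _ = 26 * (1 + β⁻¹) * ((s + 1) / √(2 ^ s)) := by
        rw [inv_one]
        ring

variable {η : ℝ → ℝ}

lemma measurable_nuMult (hη : ∀ ξ : ℝ, 1 / 2 ≤ |ξ| → η ξ = 0) (hm : Measurable η)
    (δ : ℕ → ℕ) (χ : (q : ℕ) → DirichletCharacter ℂ q) (β : ℕ → ℝ) (s n : ℕ) :
    Measurable (nuMult η δ χ β s n) := by
  have hM (b : ℝ) (c : ℝ) : Measurable fun ξ => Mhat b (2 ^ n) (ξ - c) :=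
    (continuous_Mhat b _).measurable.comp (measurable_sub_const c)
  have hE (c : ℝ) : Measurable fun ξ => etaPer η s (ξ - c) :=
    (measurable_etaPer hη hm s).comp (measurable_sub_const c)
  unfold nuMult
  fun_prop

lemma exists_nuMult_eq_Lhat_mul_etaPer (hη : ∀ ξ : ℝ, 1 / 2 ≤ |ξ| → η ξ = 0)
    (δ : ℕ → ℕ) (χ : (q : ℕ) → DirichletCharacter ℂ q) (β : ℕ → ℝ) (s : ℕ) (ξ : ℝ) :
    (∀ n, nuMult η δ χ β s n ξ = 0) ∨ ∃ p ∈ Rset s, ∀ n,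
      nuMult η δ χ β s n ξ = Lhat p (δ p.2) (χ p.2) (β p.2) (2 ^ n) (ξ - (p.1 : ℝ) / p.2) *
        etaPer η s (ξ - (p.1 : ℝ) / p.2) := by
  by_cases hex : ∃ p ∈ Rset s, etaPer η s (ξ - (p.1 : ℝ) / p.2) ≠ 0
  · obtain ⟨p, hp, hne⟩ := hex
    refine Or.inr ⟨p, hp, fun n => sum_eq_single p (fun p' hp' hpp' => ?_) fun h => absurd hp h⟩
    have hzero : etaPer η s (ξ - (p'.1 : ℝ) / p'.2) = 0 := by
      contrapose! hpp'
      exact eq_of_etaPer_sub_ne_zero hη hp' hp hpp' hne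
    rw [hzero, Complex.ofReal_zero, mul_zero]
  · push Not at hex
    refine Or.inl fun n => sum_eq_zero fun p hp => ?_
    rw [hex p hp, Complex.ofReal_zero, mul_zero]

lemma variationNorm_nuMult_le (hη : ∀ ξ : ℝ, 1 / 2 ≤ |ξ| → η ξ = 0)
    (hη1 : ∀ ξ, |η ξ| ≤ 1) {δ : ℕ → ℕ} (χ : (q : ℕ) → DirichletCharacter ℂ q)
    {β : ℕ → ℝ} {b : ℝ} (hb : 0 < b) {s : ℕ}
    (hδ : ∀ q, 2 ^ s ≤ q → q < 2 ^ (s + 1) → δ q ≤ 1)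
    (hβ : ∀ q, 2 ^ s ≤ q → q < 2 ^ (s + 1) → b ≤ β q ∧ β q ≤ 1) (ξ : ℝ) (N : ℕ) :
    variationNorm (fun n => nuMult η δ χ β s n ξ) N ≤
      26 * (1 + b⁻¹) * ((s + 1) / √(2 ^ s)) := by
  obtain hzero | ⟨p, hp, hsingle⟩ := exists_nuMult_eq_Lhat_mul_etaPer hη δ χ β s ξ
  · simp only [hzero, variationNorm_zero]
    positivity
  · obtain ⟨⟨hq, hq'⟩, -⟩ := mem_Rset.1 hp
    obtain ⟨hbβ, hβ1⟩ := hβ p.2 hq hq'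
    have hcutoff : ‖(etaPer η s (ξ - (p.1 : ℝ) / p.2) : ℂ)‖ ≤ 1 := by
      rw [Complex.norm_real]
      exact abs_etaPer_le_one hη hη1 s _
    simp only [hsingle]
    rw [variationNorm_mul_const]
    refine (mul_le_of_le_one_right (variationNorm_nonneg _ _) hcutoff).trans ?_
    refine (variationNorm_Lhat_two_pow_le hp (hδ p.2 hq hq') (χ p.2) (hb.trans_le hbβ) hβ1
      _ N).trans ?_
    gcongr

end Multiplier

lemma sqrt_tsum_iSup_norm_nuMult_sq_le {η : ℝ → ℝ} (hηm : Measurable η) (hη1 : ∀ ξ, |η ξ| ≤ 1)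
    (hη : ∀ ξ : ℝ, 1 / 2 ≤ |ξ| → η ξ = 0) {b : ℝ} (hb : 0 < b) (s S : ℕ) {δ : ℕ → ℕ}
    (hδ : ∀ q, 2 ^ s ≤ q → q < 2 ^ (s + 1) → δ q ≤ 1) (χ : (q : ℕ) → DirichletCharacter ℂ q)
    {β : ℕ → ℝ} (hβ : ∀ q, 2 ^ s ≤ q → q < 2 ^ (s + 1) → b ≤ β q ∧ β q ≤ 1) {f : ℤ → ℂ}
    (hf : Summable f) :
    √(∑' x : ℤ, (⨆ n : Fin (2 ^ S + 1),
        ‖FinvInt (fun ξ => nuMult η δ χ β s n ξ * fhat f ξ) x‖) ^ 2) ≤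
      (S + 2) * (26 * (1 + b⁻¹) * ((s + 1) / √(2 ^ s))) * √(∑' x : ℤ, ‖f x‖ ^ 2) :=
  sqrt_tsum_iSup_norm_multiplier_sq_le (fun n => measurable_nuMult hη hηm δ χ β s n)
    (fun ξ N => variationNorm_nuMult_le hη hη1 χ hb hδ hβ ξ N) hf S

lemma exists_mul_div_sqrt_two_pow_le {ε : ℝ} (hε : 0 < ε) {A B : ℝ} (hA : 0 < A) (hB : 0 < B) :
    ∃ C : ℝ, 0 < C ∧ ∀ s : ℕ, (s + A) * (B * ((s + 1) / √(2 ^ s))) ≤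
      C * (s + 1) * (2 : ℝ) ^ (-(s : ℝ) * (1 / 2 - ε)) := by
  have hlog : 0 < ε * Real.log 2 := mul_pos hε (Real.log_pos one_lt_two)
  refine ⟨B * (A + (ε * Real.log 2)⁻¹), by positivity, fun s => ?_⟩
  have hexp : s + A ≤ (A + (ε * Real.log 2)⁻¹) * (2 : ℝ) ^ (s * ε) := by
    have hlin : s * (ε * Real.log 2) + 1 ≤ (2 : ℝ) ^ (s * ε) := by
      rw [Real.rpow_def_of_pos two_pos, mul_comm (Real.log 2), mul_assoc]
      exact Real.add_one_le_exp _
    refine le_trans ?_ (mul_le_mul_of_nonneg_left hlin (by positivity))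
    have hcancel : (ε * Real.log 2)⁻¹ * (s * (ε * Real.log 2)) = s := by field_simp
    have hnonneg : 0 ≤ A * (s * (ε * Real.log 2)) := by positivity
    linarith [inv_pos.2 hlog]
  have hpow : (2 : ℝ) ^ (-(s : ℝ) * (1 / 2 - ε)) = 2 ^ (s * ε) / √(2 ^ s) := by
    rw [Real.sqrt_eq_rpow, ← Real.rpow_natCast, ← Real.rpow_mul two_pos.le,
      ← Real.rpow_sub two_pos]
    ring_nf
  rw [hpow]
  calc (s + A) * (B * ((s + 1) / √(2 ^ s)))
      ≤ (A + (ε * Real.log 2)⁻¹) * 2 ^ (s * ε) * (B * ((s + 1) / √(2 ^ s))) := by gcongr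
    _ = _ := by ring

theorem stmt_13_general {ε b : ℝ} (hε : 0 < ε) (hb : 0 < b) :
    ∃ C : ℝ, 0 < C ∧ ∀ η : ℝ → ℝ, Measurable η → (∀ ξ, |η ξ| ≤ 1) →
      (∀ ξ : ℝ, 1 / 2 ≤ |ξ| → η ξ = 0) →
      ∀ (s : ℕ) (δ : ℕ → ℕ), (∀ q, 2 ^ s ≤ q → q < 2 ^ (s + 1) → δ q ≤ 1) →
      ∀ (χ : (q : ℕ) → DirichletCharacter ℂ q) (β : ℕ → ℝ),
      (∀ q, 2 ^ s ≤ q → q < 2 ^ (s + 1) → b ≤ β q ∧ β q ≤ 1) →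
      ∀ f : ℤ → ℂ, Summable f →
        √(∑' x : ℤ, (⨆ n : Fin (2 ^ (s + 4) + 1),
            ‖FinvInt (fun ξ => nuMult η δ χ β s n ξ * fhat f ξ) x‖) ^ 2) ≤
          C * (s + 1) * (2 : ℝ) ^ (-(s : ℝ) * (1 / 2 - ε)) * √(∑' x : ℤ, ‖f x‖ ^ 2) := by
  obtain ⟨C, hC, hCs⟩ := exists_mul_div_sqrt_two_pow_le hε (A := 6) (B := 26 * (1 + b⁻¹))
    (by norm_num) (by positivity)
  refine ⟨C, hC, fun η hηm hη1 hη s δ hδ χ β hβ f hf => ?_⟩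
  refine (sqrt_tsum_iSup_norm_nuMult_sq_le hηm hη1 hη hb s (s + 4) hδ χ hβ hf).trans ?_
  refine mul_le_mul_of_nonneg_right (le_trans (le_of_eq ?_) (hCs s)) (Real.sqrt_nonneg _)
  push_cast
  ring

/-- `ℓ²` bound for the maximal function of the approximating multipliers `ν_n^s`
over `0 ≤ n ≤ 2^{s+4}`. -/
theorem stmt_13 (ε : ℝ) (hε : 0 < ε) (η : ℝ → ℝ) (hη : IsEta η) :
    ∃ C : ℝ, 0 < C ∧
      ∀ (s : ℕ), 1 ≤ s →
        ∀ (δ : ℕ → ℕ), (∀ q, δ q ≤ 1) →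
          ∀ (χ : (q : ℕ) → DirichletCharacter ℂ q),
            (∀ q, 2 ^ s ≤ q → q < 2 ^ (s + 1) →
              (∀ m : ZMod q, χ q m = -1 ∨ χ q m = 0 ∨ χ q m = 1) ∧ ∃ m : ZMod q, χ q m = -1) →
            ∀ (β : ℕ → ℝ), (∀ q, 1 / 2 ≤ β q ∧ β q ≤ 1) →
              ∀ (f : ℤ → ℂ), (Function.support f).Finite →
                Real.sqrt (∑' x : ℤ,
                    (⨆ n : Fin (2 ^ (s + 4) + 1),
                      ‖FinvInt (fun ξ => nuMult η δ χ β s n ξ * fhat f ξ) x‖) ^ 2) ≤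
                  C * (s + 1) * (2 : ℝ) ^ (-(s : ℝ) * (1 / 2 - ε)) *
                    Real.sqrt (∑' x : ℤ, ‖f x‖ ^ 2) := by
  obtain ⟨hsmooth, hη01, -, hsupp, -⟩ := hη
  obtain ⟨C, hC, hbound⟩ := stmt_13_general hε one_half_pos
  refine ⟨C, hC, fun s _ δ hδ χ _ β hβ f hf => hbound η hsmooth.continuous.measurable
    (fun ξ => ?_) hsupp s δ (fun q _ _ => hδ q) χ β (fun q _ _ => hβ q) f
    (summable_of_hasFiniteSupport hf)⟩
  exact abs_le.2 ⟨by linarith [(hη01 ξ).1], (hη01 ξ).2⟩
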